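/- arXiv:2605.08337 — 3 statements merged into one kernel-verified Lean document; each statement's English description precedes it below -/
import Mathlib

section
/- Let S be a unitary operator on H_p ⊗ H_t, let |i⟩ ∈ H_p and |t⟩ ∈ H_t be unit vectors, and let {|g⟩}_{g∈B} be an orthonormal basis of H_p containing |i⟩. Define the Kraus operators S_g = (⟨g| ⊗ I_t) S (|i⟩ ⊗ I_t) on H_t, the final states ρ_f = |t⟩⟨t| and ρ_f' = Σ_{g∈B} S_g |t⟩⟨t| S_g†, the orthogonal scattering probabilities p_⊥ = 1 − ⟨t|ρ_f'|t⟩ and p_⊥^{i→i} = ⟨t| S_i† (I_t − |t⟩⟨t|) S_i |t⟩, and the scattering probability p_s = 1 − ‖S_i|t⟩‖². Then the trace distance between the two final states satisfies (1/2)·‖ρ_f' − ρ_f‖₁ ≤ √(p_⊥^{i→i}) + √(p_⊥ · p_s). -/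
open scoped BigOperators Kronecker Matrix ComplexOrder

noncomputable section
namespace Paper

/-- A density matrix: a positive semidefinite operator of trace one. -/
def IsDensityMatrix {n : Type*} [Fintype n] (ρ : Matrix n n ℂ) : Prop :=
  ρ.PosSemidef ∧ ρ.trace = 1

/-- The operator norm `‖A‖_∞` (largest singular value) of a matrix,
as the operator norm of the induced map on Euclidean space. -/
noncomputable def opNorm {n : Type*} [Fintype n] [DecidableEq n] (A : Matrix n n ℂ) : ℝ :=
  ‖LinearMap.toContinuousLinearMap (Matrix.toEuclideanLin A)‖

/-- Von Neumann entropy `−∑ λ ln λ` over the eigenvalues; since `Real.log 0 = 0`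
in Mathlib, the convention `0 · ln 0 = 0` is automatic. -/
noncomputable def entropy {n : Type*} [Fintype n] [DecidableEq n] (σ : Matrix n n ℂ) : ℝ :=
  if h : σ.IsHermitian then -∑ i, h.eigenvalues i * Real.log (h.eigenvalues i) else 0

/-- The variance `Var_ρ(A) = Tr[ρ A† A] − |Tr[ρ A]|²`. -/
noncomputable def variance {n : Type*} [Fintype n] (ρ A : Matrix n n ℂ) : ℝ :=
  (ρ * (Aᴴ * A)).trace.re - ‖(ρ * A).trace‖ ^ 2

/-- The trace norm `‖A‖₁ = Tr √(A†A)`: the sum of the singular values. -/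
noncomputable def traceNorm {n : Type*} [Fintype n] [DecidableEq n] (A : Matrix n n ℂ) : ℝ :=
  ∑ i, Real.sqrt ((Matrix.posSemidef_conjTranspose_mul_self A).1.eigenvalues i)

/-- The pure state `|v⟩⟨v|` associated with a vector `v`. -/
def pureState {n : Type*} (v : n → ℂ) : Matrix n n ℂ :=
  Matrix.of fun x y => v x * (starRingEnd ℂ) (v y)

/-- The expectation value `⟨v|M|v⟩`. -/
noncomputable def expval {n : Type*} [Fintype n] (M : Matrix n n ℂ) (v : n → ℂ) : ℂ :=
  ∑ x, ∑ y, (starRingEnd ℂ) (v x) * M x y * v y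

variable {N : ℕ} {d : Fin N → Type*} [∀ k, Fintype (d k)] [∀ k, DecidableEq (d k)]

/-- Extension of a local operator on the `k`-th factor to the `N`-fold tensor
product `H = H_1 ⊗ ⋯ ⊗ H_N`, tensoring with the identity on every other factor.
(The tensor product is realized with index set `∀ j, d j`.) -/
def extendAt (k : Fin N) (A : Matrix (d k) (d k) ℂ) : Matrix (∀ j, d j) (∀ j, d j) ℂ :=
  Matrix.of fun x y => if ∀ j, j ≠ k → x j = y j then A (x k) (y k) else 0

/-- Reduced density matrix on the `k`-th factor: partial trace over all other factors. -/
noncomputable def reduce (k : Fin N) (ρ : Matrix (∀ j, d j) (∀ j, d j) ℂ) :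
    Matrix (d k) (d k) ℂ :=
  Matrix.of fun a b => ∑ x : ∀ j, d j, if x k = a then ρ x (Function.update x k b) else 0

/-- The operator `(⟨f| ⊗ I_t) S (|i⟩ ⊗ I_t)` on the target space `H_t`, obtained by
sandwiching `S` between the indicated particle states. -/
noncomputable def sandwichOp {p t : Type*} [Fintype p] [Fintype t]
    (S : Matrix (p × t) (p × t) ℂ) (f i : p → ℂ) : Matrix t t ℂ :=
  Matrix.of fun a b => ∑ x, ∑ y, (starRingEnd ℂ) (f x) * S (x, a) (y, b) * i y

/-!
Write `K_b` for the Kraus operators and put `x_b = K_b |t⟩`, so that `∑ ‖x_b‖² = 1` and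
`ρ_f' - ρ_f = ∑_b (|x_b⟩⟨x_b| - |y_b⟩⟨y_b|)` with `y_b = ‖x_b‖ |t⟩`. Polarization,
`|x⟩⟨x| - |y⟩⟨y| = (|x - y⟩⟨x + y| + |x + y⟩⟨x - y|) / 2`, bounds the trace norm of each term by
`‖x - y‖ ‖x + y‖`; since `|y⟩⟨y|` does not see the phase of `y`, that phase may be chosen to
make `⟪x, y⟫` real, and then `‖x - y‖² ‖x + y‖² = (‖x‖² + ‖y‖²)² - 4 ‖⟪x, y⟫‖²`. The term `b` thus
contributes `√(r_b q_b)` to the trace distance, where `r_b = ‖x_b‖²` and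
`q_b = ‖x_b‖² - ‖⟪t, x_b⟫‖²`. As `r_{b₀} ≤ 1`, the term `b₀` is at most `√q_{b₀}`, and
Cauchy-Schwarz over the remaining indices gives the second summand.
-/

open scoped InnerProductSpace

theorem sum_sqrt_mul_le {B : Type*} [Fintype B] {r q : B → ℝ} (hr : ∀ b, 0 ≤ r b)
    (hq : ∀ b, 0 ≤ q b) (hr_sum : ∑ b, r b = 1) (b₀ : B) :
    ∑ b, √(r b * q b) ≤ √(q b₀) + √((∑ b, q b) * (1 - r b₀)) := by
  classical
  have hr_rest : ∑ b ∈ Finset.univ.erase b₀, r b = 1 - r b₀ :=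
    eq_sub_of_add_eq ((Finset.sum_erase_add _ _ (Finset.mem_univ b₀)).trans hr_sum)
  have hq_rest : ∑ b ∈ Finset.univ.erase b₀, q b ≤ ∑ b, q b :=
    Finset.sum_le_sum_of_subset_of_nonneg (Finset.erase_subset _ _) fun b _ _ => hq b
  have hr_le : r b₀ ≤ 1 := hr_sum ▸ Finset.single_le_sum (fun b _ => hr b) (Finset.mem_univ b₀)
  rw [← Finset.add_sum_erase _ _ (Finset.mem_univ b₀)]
  refine add_le_add (Real.sqrt_le_sqrt (mul_le_of_le_one_left (hq b₀) hr_le)) ?_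
  calc ∑ b ∈ Finset.univ.erase b₀, √(r b * q b)
      = ∑ b ∈ Finset.univ.erase b₀, √(q b) * √(r b) :=
        Finset.sum_congr rfl fun b _ => by rw [mul_comm, Real.sqrt_mul (hq b)]
    _ ≤ √(∑ b ∈ Finset.univ.erase b₀, q b) * √(∑ b ∈ Finset.univ.erase b₀, r b) :=
        Real.sum_sqrt_mul_sqrt_le _ hq hr
    _ ≤ √(∑ b, q b) * √(1 - r b₀) := by rw [hr_rest]; gcongr
    _ = √((∑ b, q b) * (1 - r b₀)) := (Real.sqrt_mul (Finset.sum_nonneg fun b _ => hq b) _).symm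

section InnerProduct

variable {𝕜 E ι : Type*} [RCLike 𝕜] [NormedAddCommGroup E] [InnerProductSpace 𝕜 E]

theorem norm_inner_sq_le_norm_sq {u : E} (hu : ‖u‖ = 1) (x : E) : ‖⟪u, x⟫_𝕜‖ ^ 2 ≤ ‖x‖ ^ 2 := by
  have h := norm_inner_le_norm (𝕜 := 𝕜) u x
  rw [hu, one_mul] at h
  exact pow_le_pow_left₀ (norm_nonneg _) h 2

theorem abs_norm_sq_sub_norm_sq_le (a b : 𝕜) :
    |‖a‖ ^ 2 - ‖b‖ ^ 2| ≤ ‖a - b‖ * ‖a + b‖ := by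
  have h : ‖a‖ ^ 2 - ‖b‖ ^ 2 = RCLike.re ⟪a - b, a + b⟫_𝕜 := by
    rw [inner_sub_left, inner_add_right, inner_add_right]
    simp only [map_sub, map_add, inner_self_eq_norm_sq, inner_re_symm (𝕜 := 𝕜) b a]
    ring
  rw [h]
  exact (RCLike.abs_re_le_norm _).trans (norm_inner_le_norm _ _)

theorem norm_sub_sq_mul_norm_add_sq (x y : E) :
    ‖x - y‖ ^ 2 * ‖x + y‖ ^ 2 = (‖x‖ ^ 2 + ‖y‖ ^ 2) ^ 2 - 4 * RCLike.re ⟪x, y⟫_𝕜 ^ 2 := by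
  rw [norm_sub_sq (𝕜 := 𝕜), norm_add_sq (𝕜 := 𝕜)]
  ring

theorem sum_abs_norm_inner_sq_sub_le_norm_sub_mul_norm_add {e : ι → E} (he : Orthonormal 𝕜 e)
    (s : Finset ι) (x y : E) :
    ∑ i ∈ s, |‖⟪e i, x⟫_𝕜‖ ^ 2 - ‖⟪e i, y⟫_𝕜‖ ^ 2| ≤ ‖x - y‖ * ‖x + y‖ := by
  have bessel (z : E) : √(∑ i ∈ s, ‖⟪e i, z⟫_𝕜‖ ^ 2) ≤ ‖z‖ :=
    Real.sqrt_le_iff.2 ⟨norm_nonneg z, he.sum_inner_products_le z⟩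
  calc ∑ i ∈ s, |‖⟪e i, x⟫_𝕜‖ ^ 2 - ‖⟪e i, y⟫_𝕜‖ ^ 2|
      ≤ ∑ i ∈ s, ‖⟪e i, x - y⟫_𝕜‖ * ‖⟪e i, x + y⟫_𝕜‖ := Finset.sum_le_sum fun i _ => by
        rw [inner_sub_right, inner_add_right]
        exact abs_norm_sq_sub_norm_sq_le _ _
    _ ≤ √(∑ i ∈ s, ‖⟪e i, x - y⟫_𝕜‖ ^ 2) * √(∑ i ∈ s, ‖⟪e i, x + y⟫_𝕜‖ ^ 2) :=
        Real.sum_mul_le_sqrt_mul_sqrt _ _ _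
    _ ≤ ‖x - y‖ * ‖x + y‖ := by gcongr <;> exact bessel _

theorem sum_abs_norm_inner_sq_sub_le {e : ι → E} (he : Orthonormal 𝕜 e) (s : Finset ι) (x y : E) :
    ∑ i ∈ s, |‖⟪e i, x⟫_𝕜‖ ^ 2 - ‖⟪e i, y⟫_𝕜‖ ^ 2| ≤
      √((‖x‖ ^ 2 + ‖y‖ ^ 2) ^ 2 - 4 * ‖⟪x, y⟫_𝕜‖ ^ 2) := by
  obtain ⟨c, hc, hcxy⟩ := RCLike.exists_norm_eq_mul_self ⟪x, y⟫_𝕜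
  have hre : RCLike.re ⟪x, c • y⟫_𝕜 = ‖⟪x, y⟫_𝕜‖ := by
    rw [inner_smul_right, ← hcxy, RCLike.ofReal_re]
  have h := sum_abs_norm_inner_sq_sub_le_norm_sub_mul_norm_add he s x (c • y)
  simp only [inner_smul_right, norm_mul, hc, one_mul] at h
  refine h.trans (Real.le_sqrt_of_sq_le ?_)
  rw [mul_pow, norm_sub_sq_mul_norm_add_sq (𝕜 := 𝕜), hre, norm_smul, hc, one_mul]

end InnerProduct

theorem sum_eigenvalues_of_eq_cfc {𝕜 n : Type*} [RCLike 𝕜] [Fintype n] [DecidableEq n]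
    {A M : Matrix n n 𝕜} (hA : A.IsHermitian) (hM : M.IsHermitian) {f : ℝ → ℝ}
    (hMf : M = cfc f A) (φ : ℝ → ℝ) :
    ∑ i, φ (hM.eigenvalues i) = ∑ i, φ (f (hA.eigenvalues i)) := by
  have hchar : M.charpoly = ∏ i, (Polynomial.X - Polynomial.C (f (hA.eigenvalues i) : 𝕜)) :=
    hMf ▸ hA.charpoly_cfc_eq f
  have hroots := hM.roots_charpoly_eq_eigenvalues
  rw [hchar, Polynomial.roots_prod _ _
    (Finset.prod_ne_zero_iff.2 fun _ _ => Polynomial.X_sub_C_ne_zero _)] at hroots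
  simpa [Function.comp_def] using
    (congrArg (fun m => (m.map fun z : 𝕜 => φ (RCLike.re z)).sum) hroots).symm

theorem traceNorm_eq_sum_abs_eigenvalues {n : Type*} [Fintype n] [DecidableEq n]
    {A : Matrix n n ℂ} (hA : A.IsHermitian) :
    traceNorm A = ∑ i, |hA.eigenvalues i| := by
  have hsq : Aᴴ * A = cfc (fun x : ℝ => x ^ 2) A := by
    rw [cfc_pow_id A 2 hA.isSelfAdjoint, hA.eq, pow_two]
  calc traceNorm A
      = ∑ i, √(hA.eigenvalues i ^ 2) := sum_eigenvalues_of_eq_cfc hA _ hsq Real.sqrt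
    _ = ∑ i, |hA.eigenvalues i| := by simp only [Real.sqrt_sq_eq_abs]

section PureState

variable {n : Type*}

theorem pureState_eq_vecMulVec (v : n → ℂ) : pureState v = Matrix.vecMulVec v (star v) := rfl

theorem isHermitian_pureState (v : n → ℂ) : (pureState v).IsHermitian := by
  rw [pureState_eq_vecMulVec, Matrix.IsHermitian, Matrix.conjTranspose_vecMulVec, star_star]

theorem pureState_smul (c : ℂ) (v : n → ℂ) :
    pureState (c • v) = ((‖c‖ ^ 2 : ℝ) : ℂ) • pureState v := by
  rw [pureState_eq_vecMulVec, star_smul, Matrix.smul_vecMulVec, Matrix.vecMulVec_smul, smul_smul,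
    Complex.ofReal_pow, ← Complex.mul_conj', ← pureState_eq_vecMulVec, starRingEnd_apply]

variable [Fintype n]

theorem mul_pureState_mul_conjTranspose {m : Type*} (M : Matrix m n ℂ) (v : n → ℂ) :
    M * pureState v * Mᴴ = pureState (M *ᵥ v) := by
  simp only [pureState_eq_vecMulVec, Matrix.mul_vecMulVec, Matrix.vecMulVec_mul,
    Matrix.star_mulVec]

theorem expval_eq_dotProduct (M : Matrix n n ℂ) (v : n → ℂ) :
    expval M v = star v ⬝ᵥ (M *ᵥ v) := by
  simp only [expval, dotProduct, Matrix.mulVec, Finset.mul_sum, mul_assoc]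
  rfl

theorem expval_sum {B : Type*} (s : Finset B) (M : B → Matrix n n ℂ) (v : n → ℂ) :
    expval (∑ b ∈ s, M b) v = ∑ b ∈ s, expval (M b) v := by
  simp only [expval_eq_dotProduct, Matrix.sum_mulVec, dotProduct_sum]

theorem expval_sub (M M' : Matrix n n ℂ) (v : n → ℂ) :
    expval (M - M') v = expval M v - expval M' v := by
  simp only [expval_eq_dotProduct, Matrix.sub_mulVec, dotProduct_sub]

theorem expval_conjTranspose_mul_mul {m : Type*} [Fintype m] (M : Matrix m m ℂ)
    (N : Matrix m n ℂ) (v : n → ℂ) : expval (Nᴴ * M * N) v = expval M (N *ᵥ v) := by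
  simp only [expval_eq_dotProduct, ← Matrix.mulVec_mulVec, Matrix.star_mulVec,
    Matrix.dotProduct_mulVec, Matrix.vecMul_vecMul, Matrix.mul_assoc]

theorem norm_toLp_sq (v : n → ℂ) :
    ‖(WithLp.toLp 2 v : EuclideanSpace ℂ n)‖ ^ 2 = ∑ a, Complex.normSq (v a) := by
  simp [EuclideanSpace.norm_sq_eq, Complex.normSq_eq_norm_sq]

theorem expval_one [DecidableEq n] (x : EuclideanSpace ℂ n) :
    expval (1 : Matrix n n ℂ) x.ofLp = ((‖x‖ ^ 2 : ℝ) : ℂ) := by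
  rw [expval_eq_dotProduct, Matrix.one_mulVec, dotProduct_comm,
    ← EuclideanSpace.inner_eq_star_dotProduct, inner_self_eq_norm_sq_to_K, Complex.ofReal_pow]
  rfl

theorem expval_pureState (x y : EuclideanSpace ℂ n) :
    expval (pureState x.ofLp) y.ofLp = ((‖⟪y, x⟫_ℂ‖ ^ 2 : ℝ) : ℂ) := by
  rw [expval_eq_dotProduct, pureState_eq_vecMulVec, Matrix.vecMulVec_mulVec, dotProduct_smul,
    op_smul_eq_mul, dotProduct_comm, dotProduct_comm (star _),
    ← EuclideanSpace.inner_eq_star_dotProduct, ← EuclideanSpace.inner_eq_star_dotProduct,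
    ← inner_conj_symm x y, Complex.mul_conj', Complex.ofReal_pow]

variable [DecidableEq n] {B : Type*} [Fintype B]

theorem traceNorm_sum_pureState_sub_le (x y : B → EuclideanSpace ℂ n) :
    traceNorm (∑ b, (pureState (x b).ofLp - pureState (y b).ofLp)) ≤
      ∑ b, √((‖x b‖ ^ 2 + ‖y b‖ ^ 2) ^ 2 - 4 * ‖⟪x b, y b⟫_ℂ‖ ^ 2) := by
  set A := ∑ b, (pureState (x b).ofLp - pureState (y b).ofLp) with hA_def
  have hA : A.IsHermitian := isSelfAdjoint_sum _ fun b _ =>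
    (isHermitian_pureState (x b).ofLp).sub (isHermitian_pureState (y b).ofLp)
  have heig (j : n) : hA.eigenvalues j =
      ∑ b, (‖⟪hA.eigenvectorBasis j, x b⟫_ℂ‖ ^ 2 - ‖⟪hA.eigenvectorBasis j, y b⟫_ℂ‖ ^ 2) := by
    rw [hA.eigenvalues_eq, ← expval_eq_dotProduct]
    simp only [hA_def, expval_sum, expval_sub, expval_pureState, ← Complex.ofReal_sub,
      ← Complex.ofReal_sum, RCLike.re_eq_complex_re, Complex.ofReal_re]
  calc traceNorm A
      ≤ ∑ j, ∑ b, |‖⟪hA.eigenvectorBasis j, x b⟫_ℂ‖ ^ 2 -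
          ‖⟪hA.eigenvectorBasis j, y b⟫_ℂ‖ ^ 2| := by
        rw [traceNorm_eq_sum_abs_eigenvalues hA]
        exact Finset.sum_le_sum fun j _ => heig j ▸ Finset.abs_sum_le_sum_abs _ _
    _ = ∑ b, ∑ j, |‖⟪hA.eigenvectorBasis j, x b⟫_ℂ‖ ^ 2 -
          ‖⟪hA.eigenvectorBasis j, y b⟫_ℂ‖ ^ 2| := Finset.sum_comm
    _ ≤ _ := Finset.sum_le_sum fun b _ =>
        sum_abs_norm_inner_sq_sub_le hA.eigenvectorBasis.orthonormal _ _ _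

theorem half_traceNorm_sum_pureState_sub_pureState_le {x : B → EuclideanSpace ℂ n}
    {u : EuclideanSpace ℂ n} (hx : ∑ b, ‖x b‖ ^ 2 = 1) (hu : ‖u‖ = 1) :
    (1 / 2 : ℝ) * traceNorm (∑ b, pureState (x b).ofLp - pureState u.ofLp) ≤
      ∑ b, √(‖x b‖ ^ 2 * (‖x b‖ ^ 2 - ‖⟪u, x b⟫_ℂ‖ ^ 2)) := by
  have hmix : ∑ b, pureState ((‖x b‖ : ℂ) • u).ofLp = pureState u.ofLp := by
    simp only [WithLp.ofLp_smul, pureState_smul, Complex.norm_real, norm_norm, ← Finset.sum_smul,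
      ← Complex.ofReal_sum, hx, Complex.ofReal_one, one_smul]
  have hterm (b : B) : √((‖x b‖ ^ 2 + ‖(‖x b‖ : ℂ) • u‖ ^ 2) ^ 2 -
        4 * ‖⟪x b, (‖x b‖ : ℂ) • u⟫_ℂ‖ ^ 2) =
      2 * √(‖x b‖ ^ 2 * (‖x b‖ ^ 2 - ‖⟪u, x b⟫_ℂ‖ ^ 2)) := by
    rw [norm_smul, inner_smul_right, norm_mul, Complex.norm_real, norm_norm, hu,
      norm_inner_symm (x b) u, ← Real.sqrt_sq (zero_le_two (α := ℝ)), ← Real.sqrt_mul (sq_nonneg 2)]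
    ring_nf
  have h := traceNorm_sum_pureState_sub_le x fun b => (‖x b‖ : ℂ) • u
  rw [Finset.sum_sub_distrib, hmix] at h
  simp only [hterm, ← Finset.mul_sum] at h
  linarith

end PureState

section Kraus

variable {t B : Type*} [Fintype t] [DecidableEq t] [Fintype B]

theorem sum_norm_toLp_mulVec_sq {m : Type*} [Fintype m] {K : B → Matrix m t ℂ}
    (hK : ∑ b, (K b)ᴴ * K b = 1) (x : EuclideanSpace ℂ t) :
    ∑ b, ‖(WithLp.toLp 2 (K b *ᵥ x.ofLp) : EuclideanSpace ℂ m)‖ ^ 2 = ‖x‖ ^ 2 := by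
  classical
  apply Complex.ofReal_injective
  rw [← expval_one, ← hK, expval_sum, Complex.ofReal_sum]
  refine Finset.sum_congr rfl fun b _ => ?_
  rw [← expval_one, ← expval_conjTranspose_mul_mul, Matrix.mul_one]

theorem trace_distance_final_states_bound_general {K : B → Matrix t t ℂ}
    (hK : ∑ b, (K b)ᴴ * K b = 1) {tv : t → ℂ} (htv : ∑ a, Complex.normSq (tv a) = 1) (b₀ : B) :
    (1 / 2 : ℝ) * traceNorm (∑ b, K b * pureState tv * (K b)ᴴ - pureState tv) ≤
      √(expval ((K b₀)ᴴ * (1 - pureState tv) * K b₀) tv).re +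
        √((1 - (expval (∑ b, K b * pureState tv * (K b)ᴴ) tv).re) *
          (1 - ∑ a, Complex.normSq ((K b₀ *ᵥ tv) a))) := by
  let u : EuclideanSpace ℂ t := WithLp.toLp 2 tv
  let x (b : B) : EuclideanSpace ℂ t := WithLp.toLp 2 (K b *ᵥ tv)
  have hu_sq : ‖u‖ ^ 2 = 1 := (norm_toLp_sq tv).trans htv
  have hu : ‖u‖ = 1 := (pow_eq_one_iff_of_nonneg (norm_nonneg u) two_ne_zero).1 hu_sq
  have hx : ∑ b, ‖x b‖ ^ 2 = 1 := (sum_norm_toLp_mulVec_sq hK u).trans hu_sq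
  have hpii : (expval ((K b₀)ᴴ * (1 - pureState tv) * K b₀) tv).re =
      ‖x b₀‖ ^ 2 - ‖⟪u, x b₀⟫_ℂ‖ ^ 2 := by
    rw [expval_conjTranspose_mul_mul, expval_sub, expval_one (x b₀), expval_pureState u (x b₀),
      ← Complex.ofReal_sub, Complex.ofReal_re, norm_inner_symm]
  have hpperp : 1 - (expval (∑ b, pureState (K b *ᵥ tv)) tv).re =
      ∑ b, (‖x b‖ ^ 2 - ‖⟪u, x b⟫_ℂ‖ ^ 2) := by
    rw [expval_sum, Complex.re_sum, Finset.sum_sub_distrib, hx]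
    exact congrArg (1 - ·) (Finset.sum_congr rfl fun b _ => by
      rw [expval_pureState (x b) u, Complex.ofReal_re])
  simp only [mul_pureState_mul_conjTranspose]
  rw [hpii, hpperp, ← norm_toLp_sq]
  exact (half_traceNorm_sum_pureState_sub_pureState_le hx hu).trans <|
    sum_sqrt_mul_le (fun b => sq_nonneg _)
      (fun b => sub_nonneg.2 (norm_inner_sq_le_norm_sq hu _)) hx b₀

end Kraus

section Sandwich

/-- The matrix of `|f⟩ ⊗ I_t`, as a map from `H_t` to `H_p ⊗ H_t`; it expresses `sandwichOp` as a
matrix product. -/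
def ketTensorOne {p : Type*} (t : Type*) [DecidableEq t] (f : p → ℂ) : Matrix (p × t) t ℂ :=
  Matrix.of fun q b => if q.2 = b then f q.1 else 0

variable {p t B : Type*} [Fintype t] [DecidableEq t] [Fintype B]

theorem sum_ketTensorOne_mul_conjTranspose [DecidableEq p] {g : B → p → ℂ}
    (hg : ∀ x y, ∑ b, g b x * starRingEnd ℂ (g b y) = if x = y then 1 else 0) :
    ∑ b, ketTensorOne t (g b) * (ketTensorOne t (g b))ᴴ = 1 := by
  ext ⟨x, a⟩ ⟨y, c⟩
  simp only [Matrix.sum_apply, Matrix.mul_apply, Matrix.conjTranspose_apply, ketTensorOne,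
    Matrix.of_apply, Matrix.one_apply, Prod.mk.injEq]
  by_cases hac : a = c
  · subst hac
    simpa using hg x y
  · simp [hac, Ne.symm hac]

variable [Fintype p]

theorem sandwichOp_eq_mul (S : Matrix (p × t) (p × t) ℂ) (f i : p → ℂ) :
    sandwichOp S f i = (ketTensorOne t f)ᴴ * S * ketTensorOne t i := by
  ext a b
  rw [sandwichOp, Matrix.of_apply, Finset.sum_comm]
  simp [ketTensorOne, Matrix.mul_apply, Fintype.sum_prod_type, Finset.sum_mul, apply_ite]

theorem conjTranspose_ketTensorOne_mul_self (f : p → ℂ) :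
    (ketTensorOne t f)ᴴ * ketTensorOne t f = ((∑ x, Complex.normSq (f x) : ℝ) : ℂ) • 1 := by
  ext a b
  by_cases hab : a = b
  · simp [hab, ketTensorOne, Matrix.mul_apply, Fintype.sum_prod_type,
      Complex.normSq_eq_conj_mul_self, apply_ite]
  · simp [hab, Ne.symm hab, ketTensorOne, Matrix.mul_apply, Fintype.sum_prod_type, apply_ite]

theorem sum_conjTranspose_sandwichOp_mul_self [DecidableEq p] {S : Matrix (p × t) (p × t) ℂ}
    (hS : Sᴴ * S = 1) {i : p → ℂ} (hi : ∑ x, Complex.normSq (i x) = 1) {g : B → p → ℂ}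
    (hg : ∀ x y, ∑ b, g b x * starRingEnd ℂ (g b y) = if x = y then 1 else 0) :
    ∑ b, (sandwichOp S (g b) i)ᴴ * sandwichOp S (g b) i = 1 := by
  let V := ketTensorOne t i
  calc ∑ b, (sandwichOp S (g b) i)ᴴ * sandwichOp S (g b) i
      = ∑ b, Vᴴ * Sᴴ * (ketTensorOne t (g b) * (ketTensorOne t (g b))ᴴ) * (S * V) := by
        simp only [V, sandwichOp_eq_mul, Matrix.conjTranspose_mul,
          Matrix.conjTranspose_conjTranspose, Matrix.mul_assoc]
    _ = Vᴴ * (Sᴴ * S) * V := by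
        rw [← Matrix.sum_mul, ← Matrix.mul_sum, sum_ketTensorOne_mul_conjTranspose hg]
        simp only [Matrix.mul_one, Matrix.mul_assoc]
    _ = 1 := by
        rw [hS, Matrix.mul_one, conjTranspose_ketTensorOne_mul_self, hi, Complex.ofReal_one,
          one_smul]

end Sandwich

/-- Lemma 5a of the paper. For a unitary `S` on `H_p ⊗ H_t`, unit vectors
`|i⟩ ∈ H_p` and `|t⟩ ∈ H_t`, and an orthonormal basis `{|g⟩}_{g∈B}` of `H_p` containing
`|i⟩`, with Kraus operators `S_g = (⟨g| ⊗ I) S (|i⟩ ⊗ I)`, final states `ρ_f = |t⟩⟨t|`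
and `ρ_f' = Σ_g S_g |t⟩⟨t| S_g†`, orthogonal scattering probabilities
`p_⊥ = 1 − ⟨t|ρ_f'|t⟩` and `p_⊥^{i→i} = ⟨t|S_i†(I − |t⟩⟨t|)S_i|t⟩`, and scattering
probability `p_s = 1 − ‖S_i|t⟩‖²`, the trace distance between the two final states obeys
`(1/2)‖ρ_f' − ρ_f‖₁ ≤ √(p_⊥^{i→i}) + √(p_⊥ · p_s)`. -/
theorem trace_distance_final_states_bound
    {p t : Type*} [Fintype p] [DecidableEq p] [Nonempty p]
    [Fintype t] [DecidableEq t] [Nonempty t]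
    (S : Matrix (p × t) (p × t) ℂ) (hS : Sᴴ * S = 1 ∧ S * Sᴴ = 1)
    (i : p → ℂ) (hi : ∑ x, Complex.normSq (i x) = 1)
    (tv : t → ℂ) (htv : ∑ a, Complex.normSq (tv a) = 1)
    {B : Type*} [Fintype B] [DecidableEq B] (g : B → p → ℂ)
    (horth : ∀ b b', ∑ x, (starRingEnd ℂ) (g b x) * g b' x = if b = b' then 1 else 0)
    (hcomplete : ∀ x y, ∑ b, g b x * (starRingEnd ℂ) (g b y) = if x = y then 1 else 0)
    (b₀ : B) (hb₀ : g b₀ = i)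
    (Si : Matrix t t ℂ) (hSi : Si = sandwichOp S i i)
    (ρf ρf' : Matrix t t ℂ)
    (hρf : ρf = pureState tv)
    (hρf' : ρf' = ∑ b, sandwichOp S (g b) i * pureState tv * (sandwichOp S (g b) i)ᴴ)
    (pperp : ℝ) (hpperp : pperp = 1 - (expval ρf' tv).re)
    (pii : ℝ)
    (hpii : pii = (expval (Siᴴ * ((1 : Matrix t t ℂ) - pureState tv) * Si) tv).re)
    (ps : ℝ) (hps : ps = 1 - ∑ a, Complex.normSq (Si.mulVec tv a)) :
    (1 / 2 : ℝ) * traceNorm (ρf' - ρf) ≤ Real.sqrt pii + Real.sqrt (pperp * ps) := by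
  subst hb₀ hρf hpperp hpii hps hρf' hSi
  exact trace_distance_final_states_bound_general
    (sum_conjTranspose_sandwichOp_mul_self hS.1 hi hcomplete) htv b₀

end Paper
end
end

section
/- Let {G^a}_{a∈A} be a finite collection of operators on a nonzero finite-dimensional complex Hilbert space K. Then the minimum over tuples of complex numbers (c^a)_{a∈A} of ‖Σ_{a∈A} (G^a − c^a·I)†(G^a − c^a·I)‖_∞ equals the maximum over density matrices ρ on K of Σ_{a∈A} Var_ρ(G^a), and both extrema are attained. -/
open scoped BigOperators Kronecker Matrix ComplexOrder

noncomputable section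
namespace Paper

variable {N : ℕ} {d : Fin N → Type*} [∀ k, Fintype (d k)] [∀ k, DecidableEq (d k)]

/-!
For every state `ρ` and all scalars `c`, the operator `M_c = Σ_a (G^a − c^a·I)†(G^a − c^a·I)` has
expectation `Tr[ρ M_c] = Σ_a Var_ρ(G^a) + Σ_a |Tr[ρ G^a] − c^a|²`. Since `M_c` is positive,
`‖M_c‖_∞` is the maximum of `Tr[σ M_c]` over all states `σ`, so every total variance is at most
every `‖M_c‖_∞`.

By compactness some state `ρ` maximizes the total variance. Along the segment from `ρ` to a state
`σ`, the total variance exceeds its linear interpolation by `t(1 − t) Σ_a |Tr[σ G^a] − Tr[ρ G^a]|²`.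
Since `ρ` is a maximizer, dividing by `t` and letting `t → 0` gives
`Σ_a Var_σ(G^a) + Σ_a |Tr[σ G^a] − Tr[ρ G^a]|² ≤ Σ_a Var_ρ(G^a)`. The left side is `Tr[σ M_c]` for
`c^a = Tr[ρ G^a]`, so this `c` attains equality.
-/

theorem norm_sq_convexCombo {E : Type*} [NormedAddCommGroup E] [InnerProductSpace ℝ E] {a b : ℝ}
    (hab : a + b = 1) (x y : E) :
    ‖a • x + b • y‖ ^ 2 = a * ‖x‖ ^ 2 + b * ‖y‖ ^ 2 - a * b * ‖x - y‖ ^ 2 := by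
  rw [norm_add_sq_real, norm_sub_sq_real, norm_smul, norm_smul, real_inner_smul_left,
    inner_smul_right, mul_pow, mul_pow, Real.norm_eq_abs, Real.norm_eq_abs, sq_abs, sq_abs]
  obtain rfl := eq_sub_of_add_eq hab
  ring

section TracePairing

variable {𝕜 m n : Type*} [RCLike 𝕜] [Fintype m] [Fintype n]

open scoped MatrixOrder in
theorem trace_mul_nonneg_of_posSemidef {P Q : Matrix n n 𝕜} (hP : P.PosSemidef)
    (hQ : Q.PosSemidef) : 0 ≤ (P * Q).trace := by
  classical
  obtain ⟨B, rfl⟩ := CStarAlgebra.nonneg_iff_eq_star_mul_self.mp hP.nonneg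
  rw [Matrix.mul_assoc, Matrix.trace_mul_comm]
  exact (hQ.mul_mul_conjTranspose_same B).trace_nonneg

theorem trace_pos_of_posSemidef_of_ne_zero {P : Matrix n n 𝕜} (hP : P.PosSemidef)
    (hP0 : P ≠ 0) : 0 < P.trace :=
  hP.trace_nonneg.lt_of_ne' (hP.trace_eq_zero_iff.not.mpr hP0)

theorem trace_vecMulVec_mul {R : Type*} [NonUnitalCommSemiring R] (x y : n → R)
    (M : Matrix n n R) : (Matrix.vecMulVec x y * M).trace = y ⬝ᵥ M *ᵥ x := by
  rw [Matrix.vecMulVec_mul, Matrix.trace_vecMulVec, dotProduct_comm, Matrix.dotProduct_mulVec]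

theorem trace_mul_conjTranspose_of_isHermitian {R : Type*} [NonUnitalCommSemiring R] [StarRing R]
    {H : Matrix n n R} (hH : H.IsHermitian) (M : Matrix n n R) :
    (H * Mᴴ).trace = star (H * M).trace := by
  rw [← Matrix.trace_conjTranspose, Matrix.conjTranspose_mul, hH.eq, Matrix.trace_mul_comm]

open scoped Matrix.Norms.Frobenius in
theorem trace_conjTranspose_mul_self_eq_frobenius_norm_sq (B : Matrix m n 𝕜) :
    (Bᴴ * B).trace = ((‖B‖ ^ 2 : ℝ) : 𝕜) := by
  rw [Matrix.frobenius_norm_def, ← Real.sqrt_eq_rpow, Real.sq_sqrt (by positivity),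
    Finset.sum_comm]
  simp [Matrix.trace, Matrix.mul_apply, RCLike.conj_mul]

end TracePairing

section DensityMatrices

variable {n : Type*} [Fintype n]

theorem isDensityMatrix_inv_re_trace_smul {P : Matrix n n ℂ} (hP : P.PosSemidef) (hP0 : P ≠ 0) :
    IsDensityMatrix (P.trace.re⁻¹ • P) := by
  obtain ⟨hpos, -⟩ := Complex.pos_iff.mp (trace_pos_of_posSemidef_of_ne_zero hP hP0)
  have htrace : P.trace = P.trace.re := Complex.eq_re_of_ofReal_le hP.trace_nonneg
  refine ⟨hP.smul (inv_nonneg.mpr hpos.le), ?_⟩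
  rw [Matrix.trace_smul, htrace, Complex.ofReal_re, Complex.real_smul, ← Complex.ofReal_mul,
    inv_mul_cancel₀ hpos.ne', Complex.ofReal_one]

theorem exists_isDensityMatrix [Nonempty n] : ∃ ρ : Matrix n n ℂ, IsDensityMatrix ρ := by
  classical
  exact ⟨_, isDensityMatrix_inv_re_trace_smul .one one_ne_zero⟩

theorem convex_setOf_isDensityMatrix : Convex ℝ {ρ : Matrix n n ℂ | IsDensityMatrix ρ} := by
  rintro ρ ⟨hρ, hρ1⟩ σ ⟨hσ, hσ1⟩ a b ha hb hab
  refine ⟨(hρ.smul ha).add (hσ.smul hb), ?_⟩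
  rw [Matrix.trace_add, Matrix.trace_smul, Matrix.trace_smul, hρ1, hσ1, ← add_smul, hab, one_smul]

open scoped MatrixOrder Matrix.Norms.Frobenius in
theorem setOf_isDensityMatrix_eq_image_sphere :
    {ρ : Matrix n n ℂ | IsDensityMatrix ρ} = (fun B ↦ Bᴴ * B) '' Metric.sphere 0 1 := by
  classical
  have mem_sphere_iff (B : Matrix n n ℂ) : B ∈ Metric.sphere 0 1 ↔ (Bᴴ * B).trace = 1 := by
    rw [mem_sphere_zero_iff_norm, ← pow_eq_one_iff_of_nonneg (norm_nonneg B) two_ne_zero,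
      trace_conjTranspose_mul_self_eq_frobenius_norm_sq]
    exact Complex.ofReal_eq_one.symm
  ext ρ
  constructor
  · rintro ⟨hρ, hρ1⟩
    obtain ⟨B, rfl⟩ := CStarAlgebra.nonneg_iff_eq_star_mul_self.mp hρ.nonneg
    exact ⟨B, (mem_sphere_iff B).mpr hρ1, rfl⟩
  · rintro ⟨B, hB, rfl⟩
    exact ⟨Matrix.posSemidef_conjTranspose_mul_self B, (mem_sphere_iff B).mp hB⟩

open scoped Matrix.Norms.Frobenius in
theorem isCompact_setOf_isDensityMatrix : IsCompact {ρ : Matrix n n ℂ | IsDensityMatrix ρ} := by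
  have := FiniteDimensional.proper ℂ (Matrix n n ℂ)
  rw [setOf_isDensityMatrix_eq_image_sphere]
  exact (isCompact_sphere 0 1).image (by fun_prop)

theorem posSemidef_iff_forall_isDensityMatrix {H : Matrix n n ℂ} (hH : H.IsHermitian) :
    H.PosSemidef ↔ ∀ ρ, IsDensityMatrix ρ → 0 ≤ (ρ * H).trace.re := by
  refine ⟨fun hpos ρ hρ ↦ (Complex.nonneg_iff.mp (trace_mul_nonneg_of_posSemidef hρ.1 hpos)).1,
    fun h ↦ .of_dotProduct_mulVec_nonneg hH fun x ↦ ?_⟩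
  rcases eq_or_ne x 0 with rfl | hx
  · simp
  have hP := Matrix.posSemidef_vecMulVec_self_star x
  have hP0 : Matrix.vecMulVec x (star x) ≠ 0 := Matrix.vecMulVec_ne_zero hx (star_ne_zero.mpr hx)
  obtain ⟨hpos, -⟩ := Complex.pos_iff.mp (trace_pos_of_posSemidef_of_ne_zero hP hP0)
  have hre : 0 ≤ (star x ⬝ᵥ H *ᵥ x).re := by
    have hmean := h _ (isDensityMatrix_inv_re_trace_smul hP hP0)
    rwa [Matrix.smul_mul, Matrix.trace_smul, Complex.smul_re, smul_eq_mul,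
      mul_nonneg_iff_of_pos_left (inv_pos.mpr hpos), trace_vecMulVec_mul] at hmean
  exact Complex.nonneg_iff.mpr ⟨hre, (hH.im_star_dotProduct_mulVec_self x).symm⟩

variable [DecidableEq n]

open scoped MatrixOrder Matrix.Norms.L2Operator in
theorem opNorm_le_iff_posSemidef_smul_one_sub {M : Matrix n n ℂ} (hM : M.PosSemidef) {r : ℝ}
    (hr : 0 ≤ r) : opNorm M ≤ r ↔ (r • (1 : Matrix n n ℂ) - M).PosSemidef := by
  rw [← Algebra.algebraMap_eq_smul_one, ← Matrix.le_iff]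
  exact CStarAlgebra.norm_le_iff_le_algebraMap M hr hM.nonneg

theorem opNorm_le_iff_forall_isDensityMatrix {M : Matrix n n ℂ} (hM : M.PosSemidef) {r : ℝ}
    (hr : 0 ≤ r) : opNorm M ≤ r ↔ ∀ ρ, IsDensityMatrix ρ → (ρ * M).trace.re ≤ r := by
  have hH : (r • (1 : Matrix n n ℂ) - M).IsHermitian :=
    (Matrix.isHermitian_one.smul (IsSelfAdjoint.all r)).sub hM.isHermitian
  rw [opNorm_le_iff_posSemidef_smul_one_sub hM hr, posSemidef_iff_forall_isDensityMatrix hH]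
  refine forall₂_congr fun ρ hρ ↦ ?_
  simp [Matrix.mul_sub, hρ.2]

end DensityMatrices

section Variance

variable {n A : Type*} [Fintype n] [Fintype A]

theorem variance_convexCombo {a b : ℝ} (hab : a + b = 1) (ρ σ M : Matrix n n ℂ) :
    variance (a • ρ + b • σ) M =
      a * variance ρ M + b * variance σ M + a * b * ‖(ρ * M).trace - (σ * M).trace‖ ^ 2 := by
  simp only [variance, Matrix.add_mul, Matrix.smul_mul, Matrix.trace_add, Matrix.trace_smul,
    norm_sq_convexCombo hab, Complex.add_re, Complex.smul_re, smul_eq_mul]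
  ring

theorem exists_isMaxOn_sum_variance [Nonempty n] (G : A → Matrix n n ℂ) :
    ∃ ρ, IsDensityMatrix ρ ∧
      IsMaxOn (fun σ ↦ ∑ a, variance σ (G a)) {σ | IsDensityMatrix σ} ρ :=
  isCompact_setOf_isDensityMatrix.exists_isMaxOn exists_isDensityMatrix
    (by unfold variance; fun_prop)

open Filter Topology in
theorem sum_variance_add_sum_norm_sq_le_of_isMaxOn {G : A → Matrix n n ℂ}
    {S : Set (Matrix n n ℂ)} (hS : Convex ℝ S) {ρ σ : Matrix n n ℂ} (hρ : ρ ∈ S) (hσ : σ ∈ S)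
    (hmax : IsMaxOn (fun τ ↦ ∑ a, variance τ (G a)) S ρ) :
    ∑ a, variance σ (G a) + ∑ a, ‖(σ * G a).trace - (ρ * G a).trace‖ ^ 2 ≤
      ∑ a, variance ρ (G a) := by
  set V := ∑ a, variance ρ (G a)
  set W := ∑ a, variance σ (G a)
  set K := ∑ a, ‖(σ * G a).trace - (ρ * G a).trace‖ ^ 2
  have hsegment : ∀ t ∈ Set.Ioo (0 : ℝ) 1, W + (1 - t) * K ≤ V := by
    rintro t ⟨ht0, ht1⟩
    have hle := hmax (hS hσ hρ ht0.le (sub_nonneg.mpr ht1.le) (add_sub_cancel t 1))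
    simp only [Set.mem_ofPred_eq, variance_convexCombo (add_sub_cancel t 1), Finset.sum_add_distrib,
      ← Finset.mul_sum] at hle
    refine le_of_mul_le_mul_left ?_ ht0
    linarith
  have hlim : Tendsto (fun t : ℝ ↦ W + (1 - t) * K) (𝓝[>] 0) (𝓝 (W + K)) :=
    (Continuous.tendsto' (by fun_prop) 0 _ (by simp)).mono_left nhdsWithin_le_nhds
  exact le_of_tendsto hlim (mem_of_superset (Ioo_mem_nhdsGT one_pos) hsegment)

theorem re_trace_mul_conjTranspose_sub_smul_one_mul_self [DecidableEq n] {ρ : Matrix n n ℂ}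
    (hρ : IsDensityMatrix ρ) (M : Matrix n n ℂ) (c : ℂ) :
    (ρ * ((M - c • (1 : Matrix n n ℂ))ᴴ * (M - c • (1 : Matrix n n ℂ)))).trace.re =
      variance ρ M + ‖(ρ * M).trace - c‖ ^ 2 := by
  have hexpand : (ρ * ((M - c • (1 : Matrix n n ℂ))ᴴ * (M - c • (1 : Matrix n n ℂ)))).trace =
      (ρ * (Mᴴ * M)).trace - c * star (ρ * M).trace - star c * ((ρ * M).trace - c) := by
    simp only [Matrix.conjTranspose_sub, Matrix.conjTranspose_smul, Matrix.conjTranspose_one,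
      Matrix.sub_mul, Matrix.mul_sub, Matrix.smul_mul, Matrix.mul_smul, Matrix.one_mul,
      Matrix.mul_one, Matrix.trace_sub, Matrix.trace_smul, smul_eq_mul,
      trace_mul_conjTranspose_of_isHermitian hρ.1.isHermitian, hρ.2]
    ring
  simp only [hexpand, variance, ← Complex.normSq_eq_norm_sq, Complex.normSq_apply, RCLike.star_def,
    Complex.sub_re, Complex.sub_im, Complex.mul_re, Complex.conj_re, Complex.conj_im]
  ring

theorem variance_nonneg {ρ : Matrix n n ℂ} (hρ : IsDensityMatrix ρ) (M : Matrix n n ℂ) :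
    0 ≤ variance ρ M := by
  classical
  have hcentered := re_trace_mul_conjTranspose_sub_smul_one_mul_self hρ M (ρ * M).trace
  rw [sub_self, norm_zero, zero_pow two_ne_zero, add_zero] at hcentered
  rw [← hcentered]
  exact (Complex.nonneg_iff.mp
    (trace_mul_nonneg_of_posSemidef hρ.1 (Matrix.posSemidef_conjTranspose_mul_self _))).1

end Variance

section SqDeviation

variable {n A : Type*} [Fintype n] [DecidableEq n] [Fintype A]

/-- The operator `Σ_a (G^a − c^a·I)†(G^a − c^a·I)`, whose operator norm is minimized over `c`. -/
def sqDeviation (G : A → Matrix n n ℂ) (c : A → ℂ) : Matrix n n ℂ :=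
  ∑ a, (G a - c a • (1 : Matrix n n ℂ))ᴴ * (G a - c a • (1 : Matrix n n ℂ))

theorem posSemidef_sqDeviation (G : A → Matrix n n ℂ) (c : A → ℂ) :
    (sqDeviation G c).PosSemidef :=
  Matrix.posSemidef_sum _ fun _ _ ↦ Matrix.posSemidef_conjTranspose_mul_self _

theorem re_trace_mul_sqDeviation {ρ : Matrix n n ℂ} (hρ : IsDensityMatrix ρ)
    (G : A → Matrix n n ℂ) (c : A → ℂ) :
    (ρ * sqDeviation G c).trace.re =
      ∑ a, variance ρ (G a) + ∑ a, ‖(ρ * G a).trace - c a‖ ^ 2 := by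
  simp only [sqDeviation, Matrix.mul_sum, Matrix.trace_sum, Complex.re_sum,
    re_trace_mul_conjTranspose_sub_smul_one_mul_self hρ, Finset.sum_add_distrib]

theorem sum_variance_le_opNorm_sqDeviation {ρ : Matrix n n ℂ} (hρ : IsDensityMatrix ρ)
    (G : A → Matrix n n ℂ) (c : A → ℂ) :
    ∑ a, variance ρ (G a) ≤ opNorm (sqDeviation G c) :=
  calc ∑ a, variance ρ (G a)
    _ ≤ ∑ a, variance ρ (G a) + ∑ a, ‖(ρ * G a).trace - c a‖ ^ 2 :=
      le_add_of_nonneg_right (by positivity)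
    _ = (ρ * sqDeviation G c).trace.re := (re_trace_mul_sqDeviation hρ G c).symm
    _ ≤ opNorm (sqDeviation G c) :=
      (opNorm_le_iff_forall_isDensityMatrix (posSemidef_sqDeviation G c) (norm_nonneg _)).mp
        le_rfl ρ hρ

theorem opNorm_sqDeviation_le_of_isMaxOn {G : A → Matrix n n ℂ} {ρ : Matrix n n ℂ}
    (hρ : IsDensityMatrix ρ)
    (hmax : IsMaxOn (fun σ ↦ ∑ a, variance σ (G a)) {σ | IsDensityMatrix σ} ρ) :
    opNorm (sqDeviation G fun a ↦ (ρ * G a).trace) ≤ ∑ a, variance ρ (G a) := by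
  refine (opNorm_le_iff_forall_isDensityMatrix (posSemidef_sqDeviation G _)
    (Finset.sum_nonneg fun a _ ↦ variance_nonneg hρ (G a))).mpr fun σ hσ ↦ ?_
  rw [re_trace_mul_sqDeviation hσ]
  exact sum_variance_add_sum_norm_sq_le_of_isMaxOn convex_setOf_isDensityMatrix hρ hσ hmax

end SqDeviation

/-- Lemma 8 of the paper, a minimax identity. For a finite collection
`{G^a}_{a∈A}` of operators on a nonzero finite-dimensional Hilbert space `K`, the minimum
over tuples `(c^a)` of complex numbers of `‖Σ_a (G^a − c^a·I)†(G^a − c^a·I)‖_∞` equals the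
maximum over density matrices `ρ` on `K` of `Σ_a Var_ρ(G^a)`, and both extrema are
attained. -/
theorem minimax_opNorm_eq_max_sum_variance
    {n : Type*} [Fintype n] [DecidableEq n] [Nonempty n]
    {A : Type*} [Fintype A] (G : A → Matrix n n ℂ) :
    ∃ V : ℝ,
      IsLeast {x : ℝ | ∃ c : A → ℂ,
        x = opNorm (∑ a, (G a - c a • (1 : Matrix n n ℂ))ᴴ *
          (G a - c a • (1 : Matrix n n ℂ)))} V ∧
      IsGreatest {x : ℝ | ∃ ρ : Matrix n n ℂ,
        IsDensityMatrix ρ ∧ x = ∑ a, variance ρ (G a)} V := by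
  obtain ⟨ρ, hρ, hmax⟩ := exists_isMaxOn_sum_variance G
  refine ⟨∑ a, variance ρ (G a), ⟨⟨fun a ↦ (ρ * G a).trace, ?_⟩, ?_⟩, ⟨ρ, hρ, rfl⟩, ?_⟩
  · exact le_antisymm (sum_variance_le_opNorm_sqDeviation hρ G _)
      (opNorm_sqDeviation_le_of_isMaxOn hρ hmax)
  · rintro _ ⟨c, rfl⟩
    exact sum_variance_le_opNorm_sqDeviation hρ G c
  · rintro _ ⟨σ, hσ, rfl⟩
    exact hmax hσ

end Paper
end
end

section
/- Let {G^a}_{a∈A} be a finite collection of operators on a nonzero finite-dimensional complex Hilbert space K, set M = ‖Σ_{a∈A} (G^a)† G^a‖_∞, and let c = (c^a)_{a∈A} be a tuple of complex numbers with Σ_{a∈A} |c^a|² > 4M. Then for every density matrix ρ on K, Σ_{a∈A} Tr[ρ (G^a − c^a·I)†(G^a − c^a·I)] > M. -/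
open scoped BigOperators Kronecker Matrix ComplexOrder

noncomputable section
namespace Paper

variable {N : ℕ} {d : Fin N → Type*} [∀ k, Fintype (d k)] [∀ k, DecidableEq (d k)]

/-!
Since `c = (c - G) + G`, the parallelogram law gives
`|c|² I ≤ 2 ((G - c I)† (G - c I) + G† G)` in the operator order. Summing over `a` and using
`∑ G† G ≤ M I` yields `(½ ∑ |c|² - M) I ≤ ∑ (G - c I)† (G - c I)`; the expectation of the left side
in any state is `½ ∑ |c|² - M`, which exceeds `M` as soon as `∑ |c|² > 4 M`.
-/

section StarRing

variable {R : Type*} [NonUnitalRing R] [StarRing R]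

theorem star_mul_self_parallelogram (x y : R) :
    star (x + y) * (x + y) + star (x - y) * (x - y) = 2 • (star x * x + star y * y) := by
  simp only [star_add, star_sub]
  noncomm_ring

theorem star_add_mul_self_le [PartialOrder R] [StarOrderedRing R] (x y : R) :
    star (x + y) * (x + y) ≤ 2 • (star x * x + star y * y) := by
  rw [← star_mul_self_parallelogram]
  exact le_add_of_nonneg_right (star_mul_self_nonneg (x - y))

theorem star_smul_mul_smul_self {𝕜 : Type*} [RCLike 𝕜] [Module ℝ R] [Module 𝕜 R]
    [IsScalarTower ℝ 𝕜 R] [IsScalarTower 𝕜 R R] [SMulCommClass 𝕜 R R] [StarModule 𝕜 R]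
    (z : 𝕜) (x : R) : star (z • x) * (z • x) = ‖z‖ ^ 2 • (star x * x) := by
  rw [star_smul, smul_mul_smul_comm, RCLike.star_def, RCLike.conj_mul, ← RCLike.ofReal_pow,
    RCLike.ofReal_alg, smul_one_smul]

theorem algebraMap_norm_sq_le {𝕜 A : Type*} [RCLike 𝕜] [Ring A] [StarRing A] [PartialOrder A]
    [StarOrderedRing A] [Algebra ℝ A] [Algebra 𝕜 A] [IsScalarTower ℝ 𝕜 A] [StarModule 𝕜 A]
    (z : 𝕜) (x : A) :
    algebraMap ℝ A (‖z‖ ^ 2) ≤ 2 • (star (x - z • 1) * (x - z • 1) + star x * x) := by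
  have h := star_add_mul_self_le (z • 1 - x) x
  rwa [sub_add_cancel, star_smul_mul_smul_self, star_one, mul_one,
    ← Algebra.algebraMap_eq_smul_one, ← neg_sub x, star_neg, neg_mul_neg] at h

end StarRing

theorem algebraMap_half_sum_norm_sq_sub_norm_le {A : Type*} [CStarAlgebra A] [PartialOrder A]
    [StarOrderedRing A] {ι : Type*} (s : Finset ι) (g : ι → A) (c : ι → ℂ) :
    algebraMap ℝ A ((∑ i ∈ s, ‖c i‖ ^ 2) / 2 - ‖∑ i ∈ s, star (g i) * g i‖) ≤
      ∑ i ∈ s, star (g i - c i • 1) * (g i - c i • 1) := by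
  set S := ∑ i ∈ s, star (g i) * g i
  set F := ∑ i ∈ s, star (g i - c i • 1) * (g i - c i • 1)
  have hS : S ≤ algebraMap ℝ A ‖S‖ :=
    IsSelfAdjoint.le_algebraMap_norm_self
      (.of_nonneg (Finset.sum_nonneg fun i _ ↦ star_mul_self_nonneg (g i)))
  have hsum : algebraMap ℝ A (∑ i ∈ s, ‖c i‖ ^ 2) ≤ (2 : ℝ) • (F + S) := by
    rw [map_sum, ofNat_smul_eq_nsmul, ← Finset.sum_add_distrib, Finset.smul_sum]
    exact Finset.sum_le_sum fun i _ ↦ algebraMap_norm_sq_le (c i) (g i)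
  rw [map_sub, sub_le_iff_le_add]
  calc algebraMap ℝ A ((∑ i ∈ s, ‖c i‖ ^ 2) / 2)
      = (2 : ℝ)⁻¹ • algebraMap ℝ A (∑ i ∈ s, ‖c i‖ ^ 2) := by
        rw [div_eq_inv_mul, map_mul, ← Algebra.smul_def]
    _ ≤ F + S := (inv_smul_le_iff_of_pos two_pos).mpr hsum
    _ ≤ F + algebraMap ℝ A ‖S‖ := by gcongr

section Matrix

open scoped MatrixOrder

variable {n 𝕜 : Type*} [Fintype n] [RCLike 𝕜]

theorem trace_mul_nonneg {P Q : Matrix n n 𝕜} (hP : 0 ≤ P) (hQ : 0 ≤ Q) :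
    0 ≤ (P * Q).trace := by
  classical
  obtain ⟨Y, rfl⟩ := CStarAlgebra.nonneg_iff_eq_star_mul_self.mp hQ
  rw [← mul_assoc, Matrix.trace_mul_comm, ← mul_assoc]
  exact ((Matrix.nonneg_iff_posSemidef.mp hP).mul_mul_conjTranspose_same Y).trace_nonneg

theorem smul_trace_le_trace_mul [DecidableEq n] {P S : Matrix n n 𝕜} (hP : 0 ≤ P) {r : ℝ}
    (hS : algebraMap ℝ (Matrix n n 𝕜) r ≤ S) : r • P.trace ≤ (P * S).trace := by
  have hnonneg := trace_mul_nonneg hP (sub_nonneg.mpr hS)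
  rwa [mul_sub, Matrix.trace_sub, sub_nonneg, Algebra.algebraMap_eq_smul_one, Matrix.mul_smul,
    mul_one, Matrix.trace_smul] at hnonneg

open scoped Matrix.Norms.L2Operator in
theorem opNorm_eq_l2_opNorm [DecidableEq n] (S : Matrix n n ℂ) : opNorm S = ‖S‖ :=
  rfl

open scoped Matrix.Norms.L2Operator in
theorem IsDensityMatrix.half_sum_norm_sq_sub_opNorm_le [DecidableEq n] {ρ : Matrix n n ℂ}
    (hρ : IsDensityMatrix ρ) {ι : Type*} (s : Finset ι) (G : ι → Matrix n n ℂ) (c : ι → ℂ) :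
    (∑ i ∈ s, ‖c i‖ ^ 2) / 2 - opNorm (∑ i ∈ s, (G i)ᴴ * G i) ≤
      (∑ i ∈ s, (ρ * ((G i - c i • 1)ᴴ * (G i - c i • 1))).trace).re := by
  have htrace :=
    smul_trace_le_trace_mul hρ.1.nonneg (algebraMap_half_sum_norm_sq_sub_norm_le s G c)
  rw [hρ.2, Matrix.mul_sum, Matrix.trace_sum] at htrace
  have hre := Complex.re_le_re htrace
  rw [Complex.smul_re, Complex.one_re, smul_eq_mul, mul_one] at hre
  rwa [opNorm_eq_l2_opNorm]

end Matrix

/-- With `M = ‖Σ_a (G^a)† G^a‖_∞`, if the tuple `c` satisfies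
`Σ_a |c^a|² > 4M`, then `F(ρ, c) = Σ_a Tr[ρ (G^a − c^a·I)†(G^a − c^a·I)] > M` for every
density matrix `ρ`. -/
theorem F_gt_M_of_large_c
    {n : Type*} [Fintype n] [DecidableEq n] [Nonempty n]
    {A : Type*} [Fintype A] (G : A → Matrix n n ℂ) (c : A → ℂ)
    (hc : 4 * opNorm (∑ a, (G a)ᴴ * G a) < ∑ a, ‖c a‖ ^ 2) :
    ∀ ρ : Matrix n n ℂ, IsDensityMatrix ρ →
      opNorm (∑ a, (G a)ᴴ * G a) <
        (∑ a, (ρ * ((G a - c a • (1 : Matrix n n ℂ))ᴴ *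
          (G a - c a • (1 : Matrix n n ℂ)))).trace).re := by
  intro ρ hρ
  linarith [hρ.half_sum_norm_sq_sub_opNorm_le Finset.univ G c]

end Paper
end
end
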